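/- arXiv:0908.3108 — 2 statements merged into one kernel-verified Lean document; each statement's English description precedes it below -/
import Mathlib

section
/- Let (D, F) be a good pair, X ⊆ ℝⁿ convex compact, A affine with A(X) ⊆ M, g ∈ ℝⁿ. Define 2Φ_*(r) = inf_{φ∈F, α>0} sup_{x,y∈X} Φ_r(x, y; φ, α) for r ≥ 0. Then Φ_*(r) is nonnegative and concave as a function of r on [0, ∞). -/
open MeasureTheory Real Matrix Set
open scoped ENNReal

/-- A "good pair" `(𝒟, ℱ)` in the sense of Juditsky–Nemirovski:
a parametric family of positive probability densities `p μ`, `μ ∈ M`, on `(Ω, P)`,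
together with a finite-dimensional linear space `F` of Borel functions on `Ω`
containing the constants, such that log-likelihood ratios belong to `F` and
`μ ↦ ln ∫ e^{φ} p_μ dP` is well defined (finite, witnessed by integrability)
and concave on `M` for every `φ ∈ F`. -/
structure GoodPair (Ω : Type*) [MeasurableSpace Ω] (P : Measure Ω)
    (E : Type*) [NormedAddCommGroup E] [NormedSpace ℝ E] where
  M : Set E
  p : E → Ω → ℝ
  F : Submodule ℝ (Ω → ℝ)
  M_open : IsOpen M
  M_convex : Convex ℝ M
  p_meas : ∀ μ ∈ M, Measurable (p μ)
  p_pos : ∀ μ ∈ M, ∀ ω, 0 < p μ ω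
  p_prob : ∀ μ ∈ M, ∫ ω, p μ ω ∂P = 1
  F_fd : FiniteDimensional ℝ F
  F_meas : ∀ φ ∈ F, Measurable φ
  F_const : ∀ c : ℝ, (fun _ : Ω => c) ∈ F
  logratio_mem : ∀ μ ∈ M, ∀ ν ∈ M, (fun ω => Real.log (p μ ω / p ν ω)) ∈ F
  F_finite : ∀ φ ∈ F, ∀ μ ∈ M, Integrable (fun ω => Real.exp (φ ω) * p μ ω) P
  F_concave : ∀ φ ∈ F,
    ConcaveOn ℝ M (fun μ => Real.log (∫ ω, Real.exp (φ ω) * p μ ω ∂P))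

variable {Ω : Type*} [MeasurableSpace Ω] {P : Measure Ω}
  {E : Type*} [NormedAddCommGroup E] [NormedSpace ℝ E] {n : ℕ}

/-- The distribution of the observation when the parameter is `μ`:
the measure with density `p μ` with respect to `P`. -/
noncomputable def obsMeasure (D : GoodPair Ω P E) (μ : E) : Measure Ω :=
  P.withDensity fun ω => ENNReal.ofReal (D.p μ ω)

/-- The `ε`-risk of an estimate `ghat` of the linear form `gᵀx`, `x ∈ X`:
`inf {δ | sup_{x ∈ X} Prob_{ω ∼ p_{A(x)}·P} {|ghat ω - gᵀx| > δ} < ε}`. -/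
noncomputable def Risk (D : GoodPair Ω P E) (A : (Fin n → ℝ) →ᵃ[ℝ] E)
    (g : Fin n → ℝ) (X : Set (Fin n → ℝ)) (ghat : Ω → ℝ) (ε : ℝ) : ℝ :=
  sInf {δ : ℝ |
    (⨆ x ∈ X, obsMeasure D (A x) {ω | δ < |ghat ω - g ⬝ᵥ x|}) < ENNReal.ofReal ε}

/-- The minimax optimal `ε`-risk over all (Borel) estimates. -/
noncomputable def RiskStar (D : GoodPair Ω P E) (A : (Fin n → ℝ) →ᵃ[ℝ] E)
    (g : Fin n → ℝ) (X : Set (Fin n → ℝ)) (ε : ℝ) : ℝ :=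
  sInf {ρ : ℝ | ∃ ghat : Ω → ℝ, Measurable ghat ∧ ρ = Risk D A g X ghat ε}

/-- The minimax optimal `ε`-risk over affine estimates, i.e. estimates `φ ∈ F`. -/
noncomputable def RiskAff (D : GoodPair Ω P E) (A : (Fin n → ℝ) →ᵃ[ℝ] E)
    (g : Fin n → ℝ) (X : Set (Fin n → ℝ)) (ε : ℝ) : ℝ :=
  sInf {ρ : ℝ | ∃ φ ∈ D.F, ρ = Risk D A g X φ ε}

/-- The function `Φ_r(x, y; φ, α)`. -/
noncomputable def PhiFun (D : GoodPair Ω P E) (A : (Fin n → ℝ) →ᵃ[ℝ] E)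
    (g : Fin n → ℝ) (r : ℝ) (x y : Fin n → ℝ) (φ : Ω → ℝ) (α : ℝ) : ℝ :=
  g ⬝ᵥ x - g ⬝ᵥ y
    + α * Real.log (∫ ω, Real.exp (φ ω / α) * D.p (A y) ω ∂P)
    + α * Real.log (∫ ω, Real.exp (-φ ω / α) * D.p (A x) ω ∂P)
    + 2 * α * r

/-- `Φ_*(r)` defined through the sup-inf value:
`2Φ_*(r) = sup_{x,y ∈ X} inf_{φ ∈ F, α > 0} Φ_r(x, y; φ, α)`. -/
noncomputable def PhiStarSI (D : GoodPair Ω P E) (A : (Fin n → ℝ) →ᵃ[ℝ] E)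
    (g : Fin n → ℝ) (X : Set (Fin n → ℝ)) (r : ℝ) : ℝ :=
  (1/2) * sSup {v : ℝ | ∃ x ∈ X, ∃ y ∈ X,
    v = sInf {w : ℝ | ∃ φ ∈ D.F, ∃ α : ℝ, 0 < α ∧ w = PhiFun D A g r x y φ α}}

/-- `Φ_*(r)` defined through the inf-sup value:
`2Φ_*(r) = inf_{φ ∈ F, α > 0} sup_{x,y ∈ X} Φ_r(x, y; φ, α)`. -/
noncomputable def PhiStarIS (D : GoodPair Ω P E) (A : (Fin n → ℝ) →ᵃ[ℝ] E)
    (g : Fin n → ℝ) (X : Set (Fin n → ℝ)) (r : ℝ) : ℝ :=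
  (1/2) * sInf {v : ℝ | ∃ φ ∈ D.F, ∃ α : ℝ, 0 < α ∧
    v = sSup {w : ℝ | ∃ x ∈ X, ∃ y ∈ X, w = PhiFun D A g r x y φ α}}

namespace GoodPair

/-- `∫ e^φ p_μ dP` is positive. -/
lemma integral_exp_mul_pos {Ω : Type*} [MeasurableSpace Ω] {P : Measure Ω}
    {E : Type*} [NormedAddCommGroup E] [NormedSpace ℝ E] (D : GoodPair Ω P E)
    {φ : Ω → ℝ} (hφ : φ ∈ D.F) {μ : E} (hμ : μ ∈ D.M) :
    0 < ∫ ω, Real.exp (φ ω) * D.p μ ω ∂P := by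
  have hpos : ∀ ω, 0 < Real.exp (φ ω) * D.p μ ω := fun ω =>
    mul_pos (Real.exp_pos _) (D.p_pos μ hμ ω)
  rw [integral_pos_iff_support_of_nonneg (fun ω => (hpos ω).le) (D.F_finite φ hφ μ hμ)]
  have hsupp : Function.support (fun ω => Real.exp (φ ω) * D.p μ ω) = univ :=
    eq_univ_of_forall fun ω => (hpos ω).ne'
  rw [hsupp, Measure.measure_univ_pos]
  rintro rfl
  simpa using D.p_prob μ hμ

/-- The two exponential moments satisfy `1 ≤ (∫ e^φ p_μ dP) (∫ e^{-φ} p_μ dP)`. -/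
lemma one_le_integral_exp_mul_integral_exp_neg {Ω : Type*} [MeasurableSpace Ω] {P : Measure Ω}
    {E : Type*} [NormedAddCommGroup E] [NormedSpace ℝ E] (D : GoodPair Ω P E)
    {φ : Ω → ℝ} (hφ : φ ∈ D.F) {μ : E} (hμ : μ ∈ D.M) :
    1 ≤ (∫ ω, Real.exp (φ ω) * D.p μ ω ∂P) * ∫ ω, Real.exp (-φ ω) * D.p μ ω ∂P := by
  have hpos := D.integral_exp_mul_pos hφ hμ
  have hint := D.F_finite φ hφ μ hμ
  have hint_neg : Integrable (fun ω => Real.exp (-φ ω) * D.p μ ω) P :=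
    D.F_finite (-φ) (neg_mem hφ) μ hμ
  have hint_p : Integrable (D.p μ) P := by simpa using D.F_finite 0 (zero_mem _) μ hμ
  set a := ∫ ω, Real.exp (φ ω) * D.p μ ω ∂P with ha
  have hle : ∀ ω, 2 * D.p μ ω ≤
      a⁻¹ * (Real.exp (φ ω) * D.p μ ω) + a * (Real.exp (-φ ω) * D.p μ ω) := by
    intro ω
    have hamgm : 2 ≤ a⁻¹ * Real.exp (φ ω) + a * Real.exp (-φ ω) := by
      have hmul : (a⁻¹ * Real.exp (φ ω)) * (a * Real.exp (-φ ω)) = 1 := by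
        rw [Real.exp_neg]
        field_simp
      have hu : 0 < a⁻¹ * Real.exp (φ ω) := by positivity
      have hv : 0 < a * Real.exp (-φ ω) := by positivity
      nlinarith [sq_nonneg (a⁻¹ * Real.exp (φ ω) - a * Real.exp (-φ ω))]
    have := mul_le_mul_of_nonneg_right hamgm (D.p_pos μ hμ ω).le
    linarith
  have hmono := integral_mono (hint_p.const_mul 2)
    ((hint.const_mul a⁻¹).add (hint_neg.const_mul a)) hle
  simp only [Pi.add_apply] at hmono
  rw [integral_add (hint.const_mul a⁻¹) (hint_neg.const_mul a), integral_const_mul,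
    integral_const_mul, integral_const_mul, D.p_prob μ hμ, ← ha,
    inv_mul_cancel₀ hpos.ne'] at hmono
  linarith

end GoodPair

/-- `Φ_r` is nonnegative on the diagonal `x = y`. -/
lemma PhiFun_self_nonneg {Ω : Type*} [MeasurableSpace Ω] {P : Measure Ω}
    {E : Type*} [NormedAddCommGroup E] [NormedSpace ℝ E] {n : ℕ} (D : GoodPair Ω P E)
    (A : (Fin n → ℝ) →ᵃ[ℝ] E) (g : Fin n → ℝ) {r : ℝ} (hr : 0 ≤ r) {x : Fin n → ℝ}
    (hx : A x ∈ D.M) {φ : Ω → ℝ} (hφ : φ ∈ D.F) {α : ℝ} (hα : 0 < α) :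
    0 ≤ PhiFun D A g r x x φ α := by
  have hmem : (fun ω => φ ω / α) ∈ D.F := by
    convert D.F.smul_mem α⁻¹ hφ using 1
    ext ω
    simp [div_eq_inv_mul]
  have hmul := D.one_le_integral_exp_mul_integral_exp_neg hmem hx
  have hpos := D.integral_exp_mul_pos hmem hx
  have hpos_neg : 0 < ∫ ω, Real.exp (-(φ ω / α)) * D.p (A x) ω ∂P :=
    D.integral_exp_mul_pos (neg_mem hmem) hx
  have hlog := Real.log_nonneg hmul
  rw [Real.log_mul hpos.ne' hpos_neg.ne'] at hlog
  simp only [PhiFun, neg_div]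
  nlinarith [mul_nonneg hα.le hlog, mul_nonneg hα.le hr]

/-- The supremum over `x, y ∈ X` of `Φ_r` is nonnegative. -/
lemma sSup_PhiFun_nonneg {Ω : Type*} [MeasurableSpace Ω] {P : Measure Ω}
    {E : Type*} [NormedAddCommGroup E] [NormedSpace ℝ E] {n : ℕ} (D : GoodPair Ω P E)
    (A : (Fin n → ℝ) →ᵃ[ℝ] E) (g : Fin n → ℝ) {X : Set (Fin n → ℝ)} (hX : X.Nonempty)
    (hA : ∀ x ∈ X, A x ∈ D.M) {r : ℝ} (hr : 0 ≤ r)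
    {φ : Ω → ℝ} (hφ : φ ∈ D.F) {α : ℝ} (hα : 0 < α) :
    0 ≤ sSup {w : ℝ | ∃ x ∈ X, ∃ y ∈ X, w = PhiFun D A g r x y φ α} := by
  obtain ⟨x, hx⟩ := hX
  exact Real.sSup_nonneg' ⟨_, ⟨x, hx, x, hx, rfl⟩, PhiFun_self_nonneg D A g hr (hA x hx) hφ hα⟩

/-- For fixed `φ` and `α`, the supremum over `x, y ∈ X` of `Φ_r` is an affine function of `r`. -/
lemma exists_sSup_PhiFun_eq_add_mul {Ω : Type*} [MeasurableSpace Ω] {P : Measure Ω}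
    {E : Type*} [NormedAddCommGroup E] [NormedSpace ℝ E] {n : ℕ} (D : GoodPair Ω P E)
    (A : (Fin n → ℝ) →ᵃ[ℝ] E) (g : Fin n → ℝ) {X : Set (Fin n → ℝ)} (hX : X.Nonempty)
    (φ : Ω → ℝ) (α : ℝ) :
    ∃ c d : ℝ, ∀ r : ℝ,
      sSup {w : ℝ | ∃ x ∈ X, ∃ y ∈ X, w = PhiFun D A g r x y φ α} = c + d * r := by
  set S : Set ℝ := {w : ℝ | ∃ x ∈ X, ∃ y ∈ X, w = PhiFun D A g 0 x y φ α} with hS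
  have hne : S.Nonempty := by
    obtain ⟨x, hx⟩ := hX
    exact ⟨_, x, hx, x, hx, rfl⟩
  have hshift : ∀ r : ℝ, {w : ℝ | ∃ x ∈ X, ∃ y ∈ X, w = PhiFun D A g r x y φ α} =
      OrderIso.addRight (2 * α * r) '' S := by
    intro r
    ext w
    constructor
    · rintro ⟨x, hx, y, hy, rfl⟩
      exact ⟨_, ⟨x, hx, y, hy, rfl⟩, by simp [PhiFun]⟩
    · rintro ⟨_, ⟨x, hx, y, hy, rfl⟩, rfl⟩
      exact ⟨x, hx, y, hy, by simp [PhiFun]⟩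
  by_cases hb : BddAbove S
  · refine ⟨sSup S, 2 * α, fun r => ?_⟩
    rw [hshift, ← OrderIso.map_csSup' _ hne hb, OrderIso.addRight_apply]
  · -- Here every supremum takes the default value `0`.
    refine ⟨0, 0, fun r => ?_⟩
    rw [hshift, Real.sSup_of_not_bddAbove (by rwa [OrderIso.bddAbove_image])]
    simp

/-- `Φ_*(r)`, defined by `2Φ_*(r) = inf_{φ∈F, α>0} sup_{x,y∈X} Φ_r(x,y;φ,α)`,
is nonnegative and concave as a function of `r` on `[0, ∞)`. -/
theorem phiStar_nonneg_concave
    {Ω : Type*} [MeasurableSpace Ω] [TopologicalSpace Ω] [PolishSpace Ω] [BorelSpace Ω]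
    {P : Measure Ω} [SigmaFinite P] {m n : ℕ}
    (D : GoodPair Ω P (Fin m → ℝ))
    (X : Set (Fin n → ℝ)) (hXne : X.Nonempty) (hXcp : IsCompact X) (hXcv : Convex ℝ X)
    (A : (Fin n → ℝ) →ᵃ[ℝ] (Fin m → ℝ)) (hA : ∀ x ∈ X, A x ∈ D.M)
    (g : Fin n → ℝ) :
    (∀ r : ℝ, 0 ≤ r → 0 ≤ PhiStarIS D A g X r) ∧
    ConcaveOn ℝ (Set.Ici (0 : ℝ)) (fun r => PhiStarIS D A g X r) := by
  have hbdd : ∀ r : ℝ, 0 ≤ r → 0 ∈ lowerBounds {v : ℝ | ∃ φ ∈ D.F, ∃ α : ℝ, 0 < α ∧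
      v = sSup {w : ℝ | ∃ x ∈ X, ∃ y ∈ X, w = PhiFun D A g r x y φ α}} := by
    rintro r hr _ ⟨φ, hφ, α, hα, rfl⟩
    exact sSup_PhiFun_nonneg D A g hXne hA hr hφ hα
  refine ⟨fun r hr => mul_nonneg (by norm_num) (Real.sInf_nonneg (hbdd r hr)),
    convex_Ici 0, fun r hr s hs a b ha hb hab => ?_⟩
  simp only [PhiStarIS, smul_eq_mul]
  rw [mul_left_comm a, mul_left_comm b, ← mul_add]
  refine mul_le_mul_of_nonneg_left (le_csInf ⟨_, 0, zero_mem _, 1, one_pos, rfl⟩ ?_)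
    (by norm_num)
  rintro _ ⟨φ, hφ, α, hα, rfl⟩
  have hr_le := csInf_le ⟨0, hbdd r hr⟩ ⟨φ, hφ, α, hα, rfl⟩
  have hs_le := csInf_le ⟨0, hbdd s hs⟩ ⟨φ, hφ, α, hα, rfl⟩
  refine (add_le_add (mul_le_mul_of_nonneg_left hr_le ha)
    (mul_le_mul_of_nonneg_left hs_le hb)).trans_eq ?_
  obtain ⟨c, d, hcd⟩ := exists_sSup_PhiFun_eq_add_mul D A g hXne φ α
  rw [hcd, hcd, hcd]
  linear_combination c * hab
end

section
/- (Proposition 4.1) In the Gaussian observation model ω = Ax + ξ with ξ ∼ N(0, I_L), where X ⊆ ℝⁿ is convex compact, A is an L×n matrix and g ∈ ℝⁿ, for every ε ∈ (0, 1/2) there exists an affine estimate ĝ_ε (the one yielded by Theorem 3.2, with ε-risk at most Φ_*(ln(2/ε))) satisfying Risk(ĝ_ε; ε) ≤ ψ(ε)·Risk_*(ε), where ψ(ε) = √(2·ln(2/ε)) / ErfInv(ε); moreover ψ(ε) = 1 + o(1) as ε → 0⁺. -/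
open MeasureTheory Real Matrix Set Filter
open scoped ENNReal Topology

/-- The standard Gaussian `N(0, I_L)` density on `ℝ^L`. -/
noncomputable def stdGaussDensity {L : ℕ} (ω : Fin L → ℝ) : ℝ :=
  (2 * Real.pi) ^ (-(L : ℝ) / 2) * Real.exp (-(∑ i, ω i ^ 2) / 2)

/-- The distribution `N(Ax, I_L)` of the observation `ω = Ax + ξ`, `ξ ∼ N(0, I_L)`. -/
noncomputable def gaussObs {L n : ℕ} (A : Matrix (Fin L) (Fin n) ℝ) (x : Fin n → ℝ) :
    Measure (Fin L → ℝ) :=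
  volume.withDensity fun ω => ENNReal.ofReal (stdGaussDensity (ω - A.mulVec x))

/-- The Euclidean norm `‖v‖₂` on `ℝ^L`. -/
noncomputable def euclNorm {L : ℕ} (v : Fin L → ℝ) : ℝ :=
  Real.sqrt (∑ i, v i ^ 2)

/-- The `ε`-risk of an estimate `ghat` in the Gaussian observation model. -/
noncomputable def gaussRisk {L n : ℕ} (A : Matrix (Fin L) (Fin n) ℝ)
    (g : Fin n → ℝ) (X : Set (Fin n → ℝ)) (ghat : (Fin L → ℝ) → ℝ) (ε : ℝ) : ℝ :=
  sInf {δ : ℝ |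
    (⨆ x ∈ X, gaussObs A x {ω | δ < |ghat ω - g ⬝ᵥ x|}) < ENNReal.ofReal ε}

/-- The minimax optimal `ε`-risk over all Borel estimates in the Gaussian model. -/
noncomputable def gaussRiskStar {L n : ℕ} (A : Matrix (Fin L) (Fin n) ℝ)
    (g : Fin n → ℝ) (X : Set (Fin n → ℝ)) (ε : ℝ) : ℝ :=
  sInf {ρ : ℝ | ∃ ghat : (Fin L → ℝ) → ℝ, Measurable ghat ∧
    ρ = gaussRisk A g X ghat ε}

/-- The function `Φ_r(x, y; φ, α)` of the Gaussian model (with linear `φ`). -/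
noncomputable def gaussPhi {L n : ℕ} (A : Matrix (Fin L) (Fin n) ℝ) (g : Fin n → ℝ)
    (r : ℝ) (x y : Fin n → ℝ) (φ : Fin L → ℝ) (α : ℝ) : ℝ :=
  g ⬝ᵥ x - g ⬝ᵥ y
    + α * Real.log (∫ ω : Fin L → ℝ,
        Real.exp (-(φ ⬝ᵥ ω) / α) * stdGaussDensity (ω - A.mulVec x))
    + α * Real.log (∫ ω : Fin L → ℝ,
        Real.exp ((φ ⬝ᵥ ω) / α) * stdGaussDensity (ω - A.mulVec y))
    + 2 * α * r

/-- `Φ_*(r)`: `2Φ_*(r) = sup_{x,y∈X} inf_{φ∈ℝ^L, α>0} Φ_r(x,y;φ,α)`. -/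
noncomputable def gaussPhiStar {L n : ℕ} (A : Matrix (Fin L) (Fin n) ℝ)
    (g : Fin n → ℝ) (X : Set (Fin n → ℝ)) (r : ℝ) : ℝ :=
  (1/2) * sSup {v : ℝ | ∃ x ∈ X, ∃ y ∈ X,
    v = sInf {w : ℝ | ∃ φ : Fin L → ℝ, ∃ α : ℝ, 0 < α ∧
      w = gaussPhi A g r x y φ α}}

/-- The standard Gaussian upper tail probability `y = (1/√(2π)) ∫_x^∞ e^{−t²/2} dt`. -/
noncomputable def gaussTail (x : ℝ) : ℝ :=
  (Real.sqrt (2 * Real.pi))⁻¹ * ∫ t in Set.Ioi x, Real.exp (-t ^ 2 / 2)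

/-- The inverse error function `ErfInv`: for `y ∈ (0, 1/2)`, `ErfInv y` is the
unique `x` with `gaussTail x = y` (realized here as an infimum). -/
noncomputable def erfInv (y : ℝ) : ℝ :=
  sInf {x : ℝ | gaussTail x ≤ y}

lemma stdGaussDensity_nonneg {L : ℕ} (ω : Fin L → ℝ) : 0 ≤ stdGaussDensity ω := by
  unfold stdGaussDensity; positivity

lemma continuous_stdGaussDensity {L : ℕ} : Continuous (stdGaussDensity (L := L)) := by
  unfold stdGaussDensity; fun_prop

lemma stdGaussDensity_sub_eq_prod {L : ℕ} (ω m : Fin L → ℝ) :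
    stdGaussDensity (ω - m) = ∏ i, ProbabilityTheory.gaussianPDFReal (m i) 1 (ω i) := by
  unfold stdGaussDensity ProbabilityTheory.gaussianPDFReal
  rw [Finset.prod_mul_distrib, ← Real.exp_sum]
  congr 1
  · rw [Finset.prod_const, Finset.card_univ, Fintype.card_fin, NNReal.coe_one, mul_one,
      Real.sqrt_eq_rpow, ← Real.rpow_neg (by positivity), ← Real.rpow_natCast,
      ← Real.rpow_mul (by positivity)]
    congr 1; ring
  · simp [Finset.sum_div, neg_div, Finset.sum_neg_distrib]

lemma exp_dotProduct_mul_stdGaussDensity {L : ℕ} (φ ω m : Fin L → ℝ) :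
    Real.exp (φ ⬝ᵥ ω) * stdGaussDensity (ω - m) =
      ∏ i, ProbabilityTheory.gaussianPDFReal (m i) 1 (ω i) * Real.exp (φ i * ω i) := by
  rw [stdGaussDensity_sub_eq_prod, dotProduct, Real.exp_sum, Finset.prod_mul_distrib, mul_comm]

lemma integrable_gaussianPDFReal_mul_exp (μ s : ℝ) :
    Integrable fun t => ProbabilityTheory.gaussianPDFReal μ 1 t * Real.exp (s * t) := by
  have h := ProbabilityTheory.integrable_exp_mul_gaussianReal (μ := μ) (v := 1) s
  rw [ProbabilityTheory.gaussianReal_of_var_ne_zero _ one_ne_zero,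
    integrable_withDensity_iff_integrable_smul' (ProbabilityTheory.measurable_gaussianPDF _ _)
      (ae_of_all _ fun _ => ProbabilityTheory.gaussianPDF_lt_top)] at h
  simpa using h

lemma integrable_exp_dotProduct_mul_stdGaussDensity {L : ℕ} (φ m : Fin L → ℝ) :
    Integrable fun ω : Fin L → ℝ => Real.exp (φ ⬝ᵥ ω) * stdGaussDensity (ω - m) := by
  simp_rw [exp_dotProduct_mul_stdGaussDensity]
  exact Integrable.fintype_prod fun i => integrable_gaussianPDFReal_mul_exp (m i) (φ i)

lemma integral_exp_dotProduct_mul_stdGaussDensity {L : ℕ} (φ m : Fin L → ℝ) :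
    ∫ ω : Fin L → ℝ, Real.exp (φ ⬝ᵥ ω) * stdGaussDensity (ω - m) =
      Real.exp (φ ⬝ᵥ m + φ ⬝ᵥ φ / 2) := by
  simp_rw [exp_dotProduct_mul_stdGaussDensity]
  rw [integral_fintype_prod_volume_eq_prod
    (fun i t => ProbabilityTheory.gaussianPDFReal (m i) 1 t * Real.exp (φ i * t))]
  have h (i : Fin L) : ∫ t, ProbabilityTheory.gaussianPDFReal (m i) 1 t * Real.exp (φ i * t) =
      Real.exp (m i * φ i + φ i ^ 2 / 2) := by
    have h1 := ProbabilityTheory.mgf_gaussianReal (p := ProbabilityTheory.gaussianReal (m i) 1)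
      (X := id) (μ := m i) (v := 1) (by simp) (φ i)
    rw [ProbabilityTheory.mgf, ProbabilityTheory.integral_gaussianReal_eq_integral_smul
      one_ne_zero] at h1
    simpa using h1
  simp_rw [h]
  rw [← Real.exp_sum, Finset.sum_add_distrib, ← Finset.sum_div]
  simp only [dotProduct, pow_two, mul_comm]

section Observation

variable {L n : ℕ} (A : Matrix (Fin L) (Fin n) ℝ) (x : Fin n → ℝ)

lemma measurable_gaussObs_density :
    Measurable fun ω : Fin L → ℝ => ENNReal.ofReal (stdGaussDensity (ω - A.mulVec x)) :=
  (continuous_stdGaussDensity.comp (by fun_prop)).measurable.ennreal_ofReal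

instance isProbabilityMeasure_gaussObs : IsProbabilityMeasure (gaussObs A x) := by
  constructor
  rw [gaussObs, withDensity_apply _ MeasurableSet.univ, Measure.restrict_univ,
    ← ofReal_integral_eq_lintegral_ofReal]
  · simpa using congrArg ENNReal.ofReal
      (integral_exp_dotProduct_mul_stdGaussDensity 0 (A.mulVec x))
  · simpa using integrable_exp_dotProduct_mul_stdGaussDensity 0 (A.mulVec x)
  · exact ae_of_all _ fun _ => stdGaussDensity_nonneg _

lemma integrable_exp_dotProduct_gaussObs (φ : Fin L → ℝ) :
    Integrable (fun ω => Real.exp (φ ⬝ᵥ ω)) (gaussObs A x) := by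
  rw [gaussObs, integrable_withDensity_iff_integrable_smul' (measurable_gaussObs_density A x)
    (ae_of_all _ fun _ => ENNReal.ofReal_lt_top)]
  refine (integrable_exp_dotProduct_mul_stdGaussDensity φ (A.mulVec x)).congr
    (ae_of_all _ fun ω => ?_)
  simp [ENNReal.toReal_ofReal (stdGaussDensity_nonneg _), mul_comm]

lemma integral_exp_dotProduct_gaussObs (φ : Fin L → ℝ) :
    ∫ ω, Real.exp (φ ⬝ᵥ ω) ∂gaussObs A x = Real.exp (φ ⬝ᵥ A.mulVec x + φ ⬝ᵥ φ / 2) := by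
  rw [gaussObs, integral_withDensity_eq_integral_toReal_smul (measurable_gaussObs_density A x)
    (ae_of_all _ fun _ => ENNReal.ofReal_lt_top),
    ← integral_exp_dotProduct_mul_stdGaussDensity φ (A.mulVec x)]
  refine integral_congr_ae (ae_of_all _ fun ω => ?_)
  simp [ENNReal.toReal_ofReal (stdGaussDensity_nonneg _), mul_comm]

/-- A unit-norm linear functional of the observation noise is standard normal. -/
lemma map_dotProduct_sub_gaussObs {φ : Fin L → ℝ} (hφ : φ ⬝ᵥ φ = 1) :
    (gaussObs A x).map (fun ω => φ ⬝ᵥ (ω - A.mulVec x)) =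
      ProbabilityTheory.gaussianReal 0 1 := by
  have key (s : ℝ) (ω : Fin L → ℝ) : Real.exp (s * (φ ⬝ᵥ (ω - A.mulVec x))) =
      Real.exp ((s • φ) ⬝ᵥ ω) * Real.exp (-(s * (φ ⬝ᵥ A.mulVec x))) := by
    rw [← Real.exp_add, dotProduct_sub, smul_dotProduct, smul_eq_mul]; ring_nf
  have hint : ProbabilityTheory.integrableExpSet (fun ω => φ ⬝ᵥ (ω - A.mulVec x))
      (gaussObs A x) = univ := by
    ext s
    simp only [ProbabilityTheory.integrableExpSet, mem_ofPred_eq, mem_univ, iff_true, key]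
    exact (integrable_exp_dotProduct_gaussObs A x (s • φ)).mul_const _
  have hmgf : ProbabilityTheory.mgf (fun ω => φ ⬝ᵥ (ω - A.mulVec x)) (gaussObs A x) =
      ProbabilityTheory.mgf id (ProbabilityTheory.gaussianReal 0 1) := by
    ext s
    rw [ProbabilityTheory.mgf_id_gaussianReal, ProbabilityTheory.mgf]
    simp_rw [key]
    rw [integral_mul_const, integral_exp_dotProduct_gaussObs, ← Real.exp_add]
    congr 1
    simp only [smul_dotProduct, dotProduct_smul, hφ, smul_eq_mul, NNReal.coe_one]
    ring
  have hmeas : Measurable fun ω : Fin L → ℝ => φ ⬝ᵥ (ω - A.mulVec x) := by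
    unfold dotProduct; fun_prop
  have h := ProbabilityTheory.eqOn_complexMGF_of_mgf hmgf
  rw [hint, interior_univ] at h
  rw [Measure.ext_of_complexMGF_eq hmeas.aemeasurable aemeasurable_id
    (funext fun z => h (mem_univ z.re)), Measure.map_id]

end Observation

lemma gaussianReal_Ioi (t : ℝ) :
    ProbabilityTheory.gaussianReal 0 1 (Ioi t) = ENNReal.ofReal (gaussTail t) := by
  rw [ProbabilityTheory.gaussianReal_apply_eq_integral _ one_ne_zero, gaussTail,
    ← integral_const_mul]
  simp [ProbabilityTheory.gaussianPDFReal]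

lemma euclNorm_sq {L : ℕ} (v : Fin L → ℝ) : euclNorm v ^ 2 = v ⬝ᵥ v := by
  rw [euclNorm, Real.sq_sqrt (by positivity), dotProduct]
  simp only [pow_two]

lemma euclNorm_nonneg {L : ℕ} (v : Fin L → ℝ) : 0 ≤ euclNorm v := Real.sqrt_nonneg _

lemma euclNorm_eq_norm {L : ℕ} (v : Fin L → ℝ) : euclNorm v = ‖WithLp.toLp 2 v‖ := by
  simp [euclNorm, EuclideanSpace.norm_eq]

lemma euclNorm_eq_zero {L : ℕ} {v : Fin L → ℝ} : euclNorm v = 0 ↔ v = 0 := by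
  rw [euclNorm_eq_norm, norm_eq_zero, WithLp.toLp_eq_zero]

lemma euclNorm_pos {L : ℕ} {v : Fin L → ℝ} (hv : v ≠ 0) : 0 < euclNorm v :=
  (euclNorm_nonneg v).lt_of_ne' (euclNorm_eq_zero.not.2 hv)

lemma euclNorm_smul {L : ℕ} (c : ℝ) (v : Fin L → ℝ) : euclNorm (c • v) = |c| * euclNorm v := by
  rw [euclNorm_eq_norm, WithLp.toLp_smul, norm_smul, Real.norm_eq_abs, euclNorm_eq_norm]

lemma euclNorm_neg {L : ℕ} (v : Fin L → ℝ) : euclNorm (-v) = euclNorm v := by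
  simp [euclNorm]

lemma dotProduct_le_euclNorm_mul {L : ℕ} (u v : Fin L → ℝ) :
    u ⬝ᵥ v ≤ euclNorm u * euclNorm v :=
  Real.sum_mul_le_sqrt_mul_sqrt _ _ _

lemma gaussObs_tail {L n : ℕ} (A : Matrix (Fin L) (Fin n) ℝ) (x : Fin n → ℝ)
    {φ : Fin L → ℝ} (hφ : φ ≠ 0) (t : ℝ) :
    gaussObs A x {ω | t * euclNorm φ < φ ⬝ᵥ (ω - A.mulVec x)} =
      ENNReal.ofReal (gaussTail t) := by
  have hpos := euclNorm_pos hφ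
  have hunit : ((euclNorm φ)⁻¹ • φ) ⬝ᵥ ((euclNorm φ)⁻¹ • φ) = 1 := by
    rw [← euclNorm_sq, euclNorm_smul, abs_of_pos (inv_pos.2 hpos), inv_mul_cancel₀ hpos.ne',
      one_pow]
  rw [← gaussianReal_Ioi, ← map_dotProduct_sub_gaussObs A x hunit,
    Measure.map_apply (by unfold dotProduct; fun_prop) measurableSet_Ioi]
  congr 1
  ext ω
  rw [mem_ofPred_eq, mem_preimage, mem_Ioi, smul_dotProduct, smul_eq_mul, inv_mul_eq_div,
    lt_div_iff₀ hpos]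

lemma integrable_exp_neg_sq_div_two : Integrable fun t : ℝ => Real.exp (-t ^ 2 / 2) := by
  refine (integrable_exp_neg_mul_sq (b := 1 / 2) (by norm_num)).congr (ae_of_all _ fun t => ?_)
  ring_nf

lemma gaussTail_antitone : Antitone gaussTail := fun a b hab => by
  unfold gaussTail
  refine mul_le_mul_of_nonneg_left ?_ (by positivity)
  exact setIntegral_mono_set integrable_exp_neg_sq_div_two.integrableOn
    (ae_of_all _ fun _ => (Real.exp_pos _).le) (Ioi_subset_Ioi hab).eventuallyLE

lemma continuous_gaussTail : Continuous gaussTail := by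
  unfold gaussTail
  refine continuous_const.mul (continuous_iff_continuousAt.2 fun a => ?_)
  exact (integrable_exp_neg_sq_div_two.integrableOn.continuousOn_Ici_primitive_Ioi
    (a₀ := a - 1)).continuousAt (Ici_mem_nhds (by linarith))

lemma gaussTail_zero : gaussTail 0 = 1 / 2 := by
  have h := integral_gaussian_Ioi (1 / 2)
  have h2 : ∫ t in Ioi (0 : ℝ), Real.exp (-t ^ 2 / 2) = √(2 * π) / 2 := by
    rw [show 2 * π = π / (1 / 2) by ring, ← h]
    congr 1; ext t; ring_nf
  rw [gaussTail, h2]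
  have : √(2 * π) ≠ 0 := by positivity
  field_simp

lemma gaussTail_le {x : ℝ} (hx : 0 ≤ x) : gaussTail x ≤ Real.exp (-x ^ 2 / 2) / 2 := by
  have h1 : ∫ t in Ioi x, Real.exp (-t ^ 2 / 2) =
      ∫ s in Ioi (0 : ℝ), Real.exp (-(s + x) ^ 2 / 2) := by
    have := (measurePreserving_add_right volume x).setIntegral_preimage_emb
      (measurableEmbedding_addRight x) (fun t => Real.exp (-t ^ 2 / 2)) (Ioi x)
    rw [← this]
    simp
  have h2 : ∫ s in Ioi (0 : ℝ), Real.exp (-(s + x) ^ 2 / 2) ≤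
      ∫ s in Ioi (0 : ℝ), Real.exp (-x ^ 2 / 2) * Real.exp (-s ^ 2 / 2) := by
    refine setIntegral_mono_on (integrable_exp_neg_sq_div_two.comp_add_right x).integrableOn
      (integrable_exp_neg_sq_div_two.const_mul _).integrableOn measurableSet_Ioi fun s hs => ?_
    rw [← Real.exp_add, Real.exp_le_exp]
    nlinarith [mul_nonneg (le_of_lt (mem_Ioi.1 hs)) hx]
  have h3 := gaussTail_zero
  unfold gaussTail at h3 ⊢
  rw [integral_const_mul] at h2
  calc _ ≤ (√(2 * π))⁻¹ * (Real.exp (-x ^ 2 / 2) * ∫ s in Ioi (0 : ℝ), Real.exp (-s ^ 2 / 2)) := by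
        rw [h1]; gcongr
    _ = Real.exp (-x ^ 2 / 2) *
          ((√(2 * π))⁻¹ * ∫ s in Ioi (0 : ℝ), Real.exp (-s ^ 2 / 2)) := by ring
    _ = _ := by rw [h3]; ring

lemma gaussTail_ge {x : ℝ} (hx : 0 ≤ x) :
    (√(2 * π))⁻¹ * Real.exp (-(x + 1) ^ 2 / 2) ≤ gaussTail x := by
  unfold gaussTail
  gcongr
  calc Real.exp (-(x + 1) ^ 2 / 2) = ∫ t in Ioc x (x + 1), Real.exp (-(x + 1) ^ 2 / 2) := by simp
    _ ≤ ∫ t in Ioc x (x + 1), Real.exp (-t ^ 2 / 2) := by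
        refine setIntegral_mono_on (by simp) integrable_exp_neg_sq_div_two.integrableOn
          measurableSet_Ioc fun t ht => ?_
        gcongr
        · exact hx.trans ht.1.le
        · exact ht.2
    _ ≤ _ := setIntegral_mono_set integrable_exp_neg_sq_div_two.integrableOn
        (ae_of_all _ fun _ => (Real.exp_pos _).le) Ioc_subset_Ioi_self.eventuallyLE

lemma log_two_div_pos {ε : ℝ} (hε : ε ∈ Ioo (0 : ℝ) (1 / 2)) :
    0 < Real.log (2 / ε) :=
  Real.log_pos ((one_lt_div hε.1).2 (by linarith [hε.2]))

lemma gaussTail_sqrt_log_le {ε : ℝ} (hε : ε ∈ Ioo (0 : ℝ) (1 / 2)) :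
    gaussTail (√(2 * Real.log (2 / ε))) ≤ ε / 4 := by
  have h := log_two_div_pos hε
  have h0 := hε.1
  refine (gaussTail_le (Real.sqrt_nonneg _)).trans_eq ?_
  rw [Real.sq_sqrt (by positivity), neg_div, mul_div_cancel_left₀ _ two_ne_zero, Real.exp_neg,
    Real.exp_log (by positivity)]
  field_simp; norm_num

lemma pos_of_gaussTail_le {ε : ℝ} (hε : ε ∈ Ioo (0 : ℝ) (1 / 2)) {x : ℝ}
    (hx : gaussTail x ≤ ε) : 0 < x := by
  by_contra! h
  have := gaussTail_antitone h
  rw [gaussTail_zero] at this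
  linarith [hε.2]

lemma bddBelow_gaussTail_le {ε : ℝ} (hε : ε ∈ Ioo (0 : ℝ) (1 / 2)) :
    BddBelow {x : ℝ | gaussTail x ≤ ε} :=
  ⟨0, fun _ hx => (pos_of_gaussTail_le hε hx).le⟩

lemma erfInv_le_sqrt_log {ε : ℝ} (hε : ε ∈ Ioo (0 : ℝ) (1 / 2)) :
    erfInv ε ≤ √(2 * Real.log (2 / ε)) :=
  csInf_le (bddBelow_gaussTail_le hε)
    ((gaussTail_sqrt_log_le hε).trans (by linarith [hε.1]))

lemma gaussTail_erfInv_le {ε : ℝ} (hε : ε ∈ Ioo (0 : ℝ) (1 / 2)) :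
    gaussTail (erfInv ε) ≤ ε :=
  (isClosed_le continuous_gaussTail continuous_const).csInf_mem
    ⟨_, (gaussTail_sqrt_log_le hε).trans (by linarith [hε.1])⟩ (bddBelow_gaussTail_le hε)

lemma erfInv_pos {ε : ℝ} (hε : ε ∈ Ioo (0 : ℝ) (1 / 2)) : 0 < erfInv ε :=
  pos_of_gaussTail_le hε (gaussTail_erfInv_le hε)

lemma le_gaussTail_erfInv {ε : ℝ} (hε : ε ∈ Ioo (0 : ℝ) (1 / 2)) :
    ε ≤ gaussTail (erfInv ε) := by
  have h : Tendsto gaussTail (𝓝[<] erfInv ε) (𝓝 (gaussTail (erfInv ε))) :=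
    continuous_gaussTail.continuousAt.tendsto.mono_left nhdsWithin_le_nhds
  refine ge_of_tendsto h ?_
  filter_upwards [self_mem_nhdsWithin] with x hx
  by_contra! hlt
  exact notMem_of_lt_csInf (mem_Iio.1 hx) (bddBelow_gaussTail_le hε) hlt.le

lemma sqrt_log_le_erfInv_add {ε : ℝ} (hε : ε ∈ Ioo (0 : ℝ) (1 / 2)) :
    √(2 * Real.log (2 / ε)) ≤ erfInv ε + (1 + √(2 * Real.log (2 * √(2 * π)))) := by
  set q := erfInv ε
  have hq : 0 < q := erfInv_pos hε
  have h0 := hε.1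
  have hpi : 1 ≤ 2 * √(2 * π) := by
    have : 1 ≤ √(2 * π) := Real.one_le_sqrt.2 (by linarith [Real.pi_gt_three])
    linarith
  have hlog : 0 ≤ Real.log (2 * √(2 * π)) := Real.log_nonneg hpi
  have h := (gaussTail_ge hq.le).trans (gaussTail_erfInv_le hε)
  have hbound : Real.log (2 / ε) ≤ (q + 1) ^ 2 / 2 + Real.log (2 * √(2 * π)) := by
    rw [Real.log_le_iff_le_exp (by positivity), Real.exp_add, Real.exp_log (by positivity),
      div_le_iff₀ h0]
    calc (2 : ℝ) = Real.exp ((q + 1) ^ 2 / 2) * (2 * √(2 * π)) *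
          ((√(2 * π))⁻¹ * Real.exp (-(q + 1) ^ 2 / 2)) := by
          rw [neg_div, Real.exp_neg]
          have : √(2 * π) ≠ 0 := by positivity
          field_simp
      _ ≤ _ := by gcongr
  rw [Real.sqrt_le_left (by positivity)]
  have hsq := Real.sq_sqrt (show 0 ≤ 2 * Real.log (2 * √(2 * π)) by positivity)
  nlinarith [Real.sqrt_nonneg (2 * Real.log (2 * √(2 * π)))]

lemma tendsto_sqrt_log_div_erfInv :
    Tendsto (fun t : ℝ => √(2 * Real.log (2 / t)) / erfInv t) (𝓝[>] 0) (𝓝 1) := by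
  set C : ℝ := 1 + √(2 * Real.log (2 * √(2 * π)))
  have hs : Tendsto (fun t : ℝ => √(2 * Real.log (2 / t))) (𝓝[>] 0) atTop := by
    refine Real.tendsto_sqrt_atTop.comp ?_
    refine (Real.tendsto_log_atTop.comp ?_).const_mul_atTop two_pos
    exact (tendsto_inv_nhdsGT_zero.const_mul_atTop two_pos).congr fun t =>
      (div_eq_mul_inv 2 t).symm
  have hsub : Tendsto (fun t : ℝ => √(2 * Real.log (2 / t)) - C) (𝓝[>] 0) atTop :=
    tendsto_atTop_add_const_right _ (-C) hs
  have hup : Tendsto (fun t : ℝ => 1 + C / (√(2 * Real.log (2 / t)) - C)) (𝓝[>] 0) (𝓝 1) := by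
    simpa using (hsub.const_div_atTop C).const_add 1
  have hmem : ∀ᶠ t : ℝ in 𝓝[>] 0, t ∈ Ioo (0 : ℝ) (1 / 2) := Ioo_mem_nhdsGT (by norm_num)
  refine tendsto_of_tendsto_of_tendsto_of_le_of_le' tendsto_const_nhds hup ?_ ?_
  · filter_upwards [hmem] with t ht
    exact (one_le_div (erfInv_pos ht)).2 (erfInv_le_sqrt_log ht)
  · filter_upwards [hmem, hsub.eventually_gt_atTop 0] with t ht hpos
    have hle := sqrt_log_le_erfInv_add ht
    calc √(2 * Real.log (2 / t)) / erfInv t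
        ≤ √(2 * Real.log (2 / t)) / (√(2 * Real.log (2 / t)) - C) := by
          gcongr
          linarith
      _ = _ := by field_simp; ring

lemma gaussPhi_eq {L n : ℕ} (A : Matrix (Fin L) (Fin n) ℝ) (g : Fin n → ℝ) (r : ℝ)
    (x y : Fin n → ℝ) (φ : Fin L → ℝ) {α : ℝ} (hα : 0 < α) :
    gaussPhi A g r x y φ α = g ⬝ᵥ (x - y) - φ ⬝ᵥ A.mulVec (x - y)
      + (euclNorm φ ^ 2 / α + 2 * α * r) := by
  have h1 (ω : Fin L → ℝ) : -(φ ⬝ᵥ ω) / α = (-(α⁻¹ • φ)) ⬝ᵥ ω := by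
    rw [neg_dotProduct, smul_dotProduct, smul_eq_mul, neg_div, inv_mul_eq_div]
  have h2 (ω : Fin L → ℝ) : (φ ⬝ᵥ ω) / α = (α⁻¹ • φ) ⬝ᵥ ω := by
    rw [smul_dotProduct, smul_eq_mul, inv_mul_eq_div]
  unfold gaussPhi
  simp_rw [h1, h2]
  rw [integral_exp_dotProduct_mul_stdGaussDensity, integral_exp_dotProduct_mul_stdGaussDensity,
    Real.log_exp, Real.log_exp, euclNorm_sq, Matrix.mulVec_sub, dotProduct_sub, dotProduct_sub]
  simp only [neg_dotProduct, dotProduct_neg, smul_dotProduct, dotProduct_smul, smul_eq_mul]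
  field_simp
  ring

lemma sInf_gaussPhi_of_le {L n : ℕ} (A : Matrix (Fin L) (Fin n) ℝ) (g : Fin n → ℝ) {r : ℝ}
    (hr : 0 < r) {x y : Fin n → ℝ} (hxy : euclNorm (A.mulVec (x - y)) ≤ 2 * √(2 * r)) :
    sInf {w : ℝ | ∃ φ : Fin L → ℝ, ∃ α : ℝ, 0 < α ∧ w = gaussPhi A g r x y φ α} =
      g ⬝ᵥ (x - y) := by
  refine csInf_eq_of_forall_ge_of_forall_gt_exists_lt ⟨_, 0, 1, one_pos, rfl⟩ ?_ ?_
  · rintro _ ⟨φ, α, hα, rfl⟩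
    rw [gaussPhi_eq A g r x y φ hα]
    have h1 := (dotProduct_le_euclNorm_mul φ (A.mulVec (x - y))).trans
      (mul_le_mul_of_nonneg_left hxy (euclNorm_nonneg φ))
    have h2 : euclNorm φ * (2 * √(2 * r)) ≤ euclNorm φ ^ 2 / α + 2 * α * r := by
      rw [div_add' _ _ _ hα.ne', le_div_iff₀ hα]
      have e : 2 * α * r * α = (α * √(2 * r)) ^ 2 := by
        rw [mul_pow, Real.sq_sqrt (by positivity)]; ring
      nlinarith [sq_nonneg (euclNorm φ - α * √(2 * r))]
    linarith
  · intro w hw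
    refine ⟨_, ⟨0, (w - g ⬝ᵥ (x - y)) / (4 * r), by have := sub_pos.2 hw; positivity, rfl⟩, ?_⟩
    have hα : 0 < (w - g ⬝ᵥ (x - y)) / (4 * r) := by have := sub_pos.2 hw; positivity
    rw [gaussPhi_eq A g r x y 0 hα, euclNorm_eq_zero.2 rfl]
    have : 2 * ((w - g ⬝ᵥ (x - y)) / (4 * r)) * r = (w - g ⬝ᵥ (x - y)) / 2 := by
      field_simp; norm_num
    rw [this, zero_dotProduct, zero_pow two_ne_zero, zero_div]
    linarith

lemma sInf_gaussPhi_of_lt {L n : ℕ} (A : Matrix (Fin L) (Fin n) ℝ) (g : Fin n → ℝ) {r : ℝ}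
    (hr : 0 < r) {x y : Fin n → ℝ} (hxy : 2 * √(2 * r) < euclNorm (A.mulVec (x - y))) :
    sInf {w : ℝ | ∃ φ : Fin L → ℝ, ∃ α : ℝ, 0 < α ∧ w = gaussPhi A g r x y φ α} = 0 := by
  apply Real.sInf_of_not_bddBelow
  rintro ⟨b, hb⟩
  set v := A.mulVec (x - y)
  set N := euclNorm v
  set s := √(2 * r)
  have hs : 0 < s := by positivity
  have hs2 : s ^ 2 = 2 * r := Real.sq_sqrt (by positivity)
  have hN : 0 < N := by linarith
  have hd : 0 < N * (N - 2 * s) := mul_pos hN (by linarith)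
  obtain ⟨k, hk⟩ := exists_gt (max 0 ((g ⬝ᵥ (x - y) - b) / (N * (N - 2 * s))))
  have hk0 : 0 < k := (le_max_left _ _).trans_lt hk
  have hk1 := (div_lt_iff₀ hd).1 ((le_max_right _ _).trans_lt hk)
  have hα : 0 < k * N / s := by positivity
  have h := hb ⟨k • v, k * N / s, hα, rfl⟩
  rw [gaussPhi_eq A g r x y _ hα, euclNorm_smul, abs_of_pos hk0, smul_dotProduct, smul_eq_mul,
    ← euclNorm_sq] at h
  have e : (k * N) ^ 2 / (k * N / s) + 2 * (k * N / s) * r = 2 * s * k * N := by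
    rw [show r = s ^ 2 / 2 by linarith]
    field_simp
    ring
  change b ≤ _ - k * N ^ 2 + ((k * N) ^ 2 / (k * N / s) + 2 * (k * N / s) * r) at h
  rw [e] at h
  nlinarith

section PhiStar

variable {L n : ℕ} (A : Matrix (Fin L) (Fin n) ℝ) (g : Fin n → ℝ) {X : Set (Fin n → ℝ)} {r : ℝ}

lemma le_two_mul_gaussPhiStar (hXcp : IsCompact X) (hr : 0 < r) {x y : Fin n → ℝ}
    (hx : x ∈ X) (hy : y ∈ X) (hxy : euclNorm (A.mulVec (x - y)) ≤ 2 * √(2 * r)) :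
    g ⬝ᵥ (x - y) ≤ 2 * gaussPhiStar A g X r := by
  have hbdd : BddAbove {v : ℝ | ∃ x ∈ X, ∃ y ∈ X,
      v = sInf {w : ℝ | ∃ φ : Fin L → ℝ, ∃ α : ℝ, 0 < α ∧ w = gaussPhi A g r x y φ α}} := by
    have hcont : Continuous fun p : (Fin n → ℝ) × (Fin n → ℝ) => g ⬝ᵥ (p.1 - p.2) := by
      unfold dotProduct; fun_prop
    obtain ⟨B, hB⟩ := (hXcp.prod hXcp).bddAbove_image hcont.continuousOn
    refine ⟨max B 0, ?_⟩
    rintro _ ⟨x, hx, y, hy, rfl⟩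
    rcases le_or_gt (euclNorm (A.mulVec (x - y))) (2 * √(2 * r)) with h | h
    · rw [sInf_gaussPhi_of_le A g hr h]
      exact (hB ⟨(x, y), ⟨hx, hy⟩, rfl⟩).trans (le_max_left _ _)
    · rw [sInf_gaussPhi_of_lt A g hr h]
      exact le_max_right _ _
  have h := le_csSup hbdd ⟨x, hx, y, hy, (sInf_gaussPhi_of_le A g hr hxy).symm⟩
  unfold gaussPhiStar
  linarith

lemma two_mul_gaussPhiStar_le (hXne : X.Nonempty) (hr : 0 < r) {M : ℝ}
    (hM : ∀ x ∈ X, ∀ y ∈ X, euclNorm (A.mulVec (x - y)) ≤ 2 * √(2 * r) → g ⬝ᵥ (x - y) ≤ M) :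
    2 * gaussPhiStar A g X r ≤ M := by
  obtain ⟨z, hz⟩ := hXne
  have hM0 : 0 ≤ M := by
    have h0 : euclNorm (A.mulVec (z - z)) = 0 := by simp [euclNorm_eq_zero]
    simpa using hM z hz z hz (h0.trans_le (by positivity))
  have h := csSup_le (s := {v : ℝ | ∃ x ∈ X, ∃ y ∈ X,
      v = sInf {w : ℝ | ∃ φ : Fin L → ℝ, ∃ α : ℝ, 0 < α ∧ w = gaussPhi A g r x y φ α}})
      (a := M) ⟨_, z, hz, z, hz, rfl⟩ (by
    rintro _ ⟨x, hx, y, hy, rfl⟩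
    rcases le_or_gt (euclNorm (A.mulVec (x - y))) (2 * √(2 * r)) with h | h
    · rw [sInf_gaussPhi_of_le A g hr h]
      exact hM x hx y hy h
    · rwa [sInf_gaussPhi_of_lt A g hr h])
  unfold gaussPhiStar
  linarith

end PhiStar

/-- Lagrange duality for maximizing `gᵀz` over a convex set under a Euclidean norm constraint:
the dual optimum is attained. -/
lemma exists_dual_certificate {L n : ℕ} (A : Matrix (Fin L) (Fin n) ℝ) (g : Fin n → ℝ)
    {K : Set (Fin n → ℝ)} (hK : Convex ℝ K) (h0 : 0 ∈ K) {ρ M : ℝ} (hρ : 0 < ρ)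
    (hM : ∀ z ∈ K, euclNorm (A.mulVec z) ≤ ρ → g ⬝ᵥ z ≤ M) :
    ∃ φ : Fin L → ℝ, ∀ z ∈ K, g ⬝ᵥ z - φ ⬝ᵥ A.mulVec z + ρ * euclNorm φ ≤ M := by
  let D : Set ((Fin L → ℝ) × ℝ) := {u | euclNorm u < ρ} ×ˢ Ioi M
  let T : (Fin n → ℝ) →ₗ[ℝ] (Fin L → ℝ) × ℝ :=
    A.mulVecLin.prod (dotProductBilin ℝ ℝ g)
  have hball : {u : Fin L → ℝ | euclNorm u < ρ} =
      (WithLp.linearEquiv 2 ℝ (Fin L → ℝ)).symm.toLinearMap ⁻¹' Metric.ball 0 ρ := by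
    ext u
    simp [euclNorm_eq_norm]
  have hDconv : Convex ℝ D := by
    refine Convex.prod ?_ (convex_Ioi M)
    rw [hball]
    exact (convex_ball _ _).linear_preimage _
  have hDopen : IsOpen D := by
    refine IsOpen.prod (isOpen_lt ?_ continuous_const) isOpen_Ioi
    unfold euclNorm; fun_prop
  have hdisj : Disjoint D (T '' K) := by
    rw [Set.disjoint_left]
    rintro _ hD ⟨z, hz, rfl⟩
    exact (hM z hz (le_of_lt hD.1)).not_gt hD.2
  obtain ⟨f, c, hfD, hfK⟩ :=
    geometric_hahn_banach_open hDconv hDopen (hK.linear_image T) hdisj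
  set κ := f (0, 1)
  obtain ⟨p, hp⟩ : ∃ p : Fin L → ℝ, ∀ u s, f (u, s) = p ⬝ᵥ u + s * κ := by
    refine ⟨fun i => f (Pi.single i 1, 0), fun u s => ?_⟩
    have h1 : (u, s) = ∑ i, u i • ((Pi.single i 1, 0) : (Fin L → ℝ) × ℝ) + s • (0, 1) := by
      ext j
      · simp [Prod.fst_sum, Finset.sum_apply, Pi.single_apply]
      · simp [Prod.snd_sum]
    rw [h1, map_add, map_sum, map_smul]
    simp only [map_smul, smul_eq_mul, dotProduct, mul_comm, κ]
  have hκ : κ < 0 := by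
    have h1 := hfD (0, |M| + 1) ⟨by simpa [euclNorm] using hρ,
      by rw [mem_Ioi]; linarith [le_abs_self M]⟩
    have h2 := hfK _ ⟨0, h0, rfl⟩
    rw [map_zero, map_zero] at h2
    rw [hp, dotProduct_zero, zero_add] at h1
    by_contra! h
    have : 0 ≤ (|M| + 1) * κ := by positivity
    linarith
  obtain ⟨φ, hpφ⟩ : ∃ φ : Fin L → ℝ, p = (-κ) • φ :=
    ⟨(-κ)⁻¹ • p, by rw [smul_inv_smul₀ (by linarith)]⟩
  refine ⟨φ, fun z hz => ?_⟩
  have key (u : Fin L → ℝ) (hu : euclNorm u < ρ) :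
      g ⬝ᵥ z - φ ⬝ᵥ A.mulVec z + φ ⬝ᵥ u ≤ M := by
    refine le_of_forall_gt_imp_ge_of_dense fun s hs => ?_
    have h1 : f (u, s) < f (A.mulVec z, g ⬝ᵥ z) :=
      (hfD (u, s) ⟨hu, hs⟩).trans_le (hfK _ ⟨z, hz, rfl⟩)
    rw [hp, hp, hpφ, smul_dotProduct, smul_dotProduct, smul_eq_mul, smul_eq_mul] at h1
    nlinarith
  rcases eq_or_ne φ 0 with hφ | hφ
  · simpa [hφ, euclNorm] using key 0 (by simpa [euclNorm] using hρ)
  have hN := euclNorm_pos hφ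
  have hlim : Tendsto (fun τ : ℝ => g ⬝ᵥ z - φ ⬝ᵥ A.mulVec z + τ * euclNorm φ) (𝓝[<] ρ)
      (𝓝 (g ⬝ᵥ z - φ ⬝ᵥ A.mulVec z + ρ * euclNorm φ)) :=
    (Continuous.tendsto (by fun_prop) ρ).mono_left nhdsWithin_le_nhds
  refine le_of_tendsto hlim ?_
  filter_upwards [Ioo_mem_nhdsLT hρ] with τ hτ
  have h := key ((τ / euclNorm φ) • φ) (by
    rw [euclNorm_smul, abs_of_pos (div_pos hτ.1 hN), div_mul_cancel₀ _ hN.ne']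
    exact hτ.2)
  rw [dotProduct_smul, ← euclNorm_sq, smul_eq_mul] at h
  rwa [pow_two, ← mul_assoc, div_mul_cancel₀ _ hN.ne'] at h

section Risk

variable {L n : ℕ} (A : Matrix (Fin L) (Fin n) ℝ) (g : Fin n → ℝ) {X : Set (Fin n → ℝ)} {ε : ℝ}

lemma nonneg_of_iSup_gaussObs_lt (hXne : X.Nonempty) (hε : ε < 1) (ghat : (Fin L → ℝ) → ℝ)
    {δ : ℝ} (hδ : (⨆ x ∈ X, gaussObs A x {ω | δ < |ghat ω - g ⬝ᵥ x|}) < ENNReal.ofReal ε) :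
    0 ≤ δ := by
  by_contra! h
  obtain ⟨x, hx⟩ := hXne
  have h1 : {ω | δ < |ghat ω - g ⬝ᵥ x|} = univ :=
    eq_univ_of_forall fun ω => h.trans_le (abs_nonneg _)
  have h2 := (le_iSup₂ (f := fun x (_ : x ∈ X) => gaussObs A x {ω | δ < |ghat ω - g ⬝ᵥ x|})
    x hx).trans_lt hδ
  rw [h1, measure_univ] at h2
  exact (h2.trans_le (ENNReal.ofReal_le_one.2 hε.le)).false

lemma gaussRisk_le (hXne : X.Nonempty) (hε : ε < 1) (ghat : (Fin L → ℝ) → ℝ)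
    {δ : ℝ} (hδ : (⨆ x ∈ X, gaussObs A x {ω | δ < |ghat ω - g ⬝ᵥ x|}) < ENNReal.ofReal ε) :
    gaussRisk A g X ghat ε ≤ δ :=
  csInf_le ⟨0, fun _ h => nonneg_of_iSup_gaussObs_lt A g hXne hε ghat h⟩ hδ

/-- An affine estimate whose bias-plus-noise bound is controlled by a dual certificate. -/
lemma exists_affine_gaussRisk_le (hXne : X.Nonempty) (hXcp : IsCompact X)
    (hε : ε ∈ Ioo (0 : ℝ) (1 / 2)) {φ : Fin L → ℝ} {M : ℝ}
    (hφ : ∀ x ∈ X, ∀ y ∈ X, g ⬝ᵥ (x - y) - φ ⬝ᵥ A.mulVec (x - y)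
      + 2 * √(2 * Real.log (2 / ε)) * euclNorm φ ≤ 2 * M) :
    ∃ c : ℝ, gaussRisk A g X (fun ω => φ ⬝ᵥ ω + c) ε ≤ M := by
  set t := √(2 * Real.log (2 / ε))
  have hcont : Continuous fun x : Fin n → ℝ => φ ⬝ᵥ A.mulVec x - g ⬝ᵥ x := by
    unfold dotProduct Matrix.mulVec dotProduct; fun_prop
  obtain ⟨a, ha, hamin⟩ := hXcp.exists_isMinOn hXne hcont.continuousOn
  obtain ⟨b, hb, hbmax⟩ := hXcp.exists_isMaxOn hXne hcont.continuousOn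
  have hab := hφ a ha b hb
  rw [dotProduct_sub, Matrix.mulVec_sub, dotProduct_sub] at hab
  let c := -((φ ⬝ᵥ A.mulVec a - g ⬝ᵥ a) + (φ ⬝ᵥ A.mulVec b - g ⬝ᵥ b)) / 2
  refine ⟨c, gaussRisk_le A g hXne (by linarith [hε.2]) _ ?_⟩
  have hsub (x : Fin n → ℝ) (hx : x ∈ X) : {ω : Fin L → ℝ | M < |φ ⬝ᵥ ω + c - g ⬝ᵥ x|} ⊆
      {ω | t * euclNorm φ < φ ⬝ᵥ (ω - A.mulVec x)} ∪
        {ω | t * euclNorm (-φ) < (-φ) ⬝ᵥ (ω - A.mulVec x)} := by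
    intro ω hω
    have h1 : φ ⬝ᵥ A.mulVec a - g ⬝ᵥ a ≤ φ ⬝ᵥ A.mulVec x - g ⬝ᵥ x := hamin hx
    have h2 : φ ⬝ᵥ A.mulVec x - g ⬝ᵥ x ≤ φ ⬝ᵥ A.mulVec b - g ⬝ᵥ b := hbmax hx
    simp only [mem_union, mem_ofPred_eq, euclNorm_neg, neg_dotProduct, dotProduct_sub, c] at hω ⊢
    rcases lt_abs.1 hω with h | h
    · left; linarith
    · right; linarith
  have hbound (x : Fin n → ℝ) (hx : x ∈ X) :
      gaussObs A x {ω | M < |φ ⬝ᵥ ω + c - g ⬝ᵥ x|} ≤ ENNReal.ofReal (ε / 2) := by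
    rcases eq_or_ne φ 0 with h0 | h0
    · refine (measure_mono (hsub x hx)).trans ?_
      simp [h0, euclNorm_eq_zero.2]
    · refine (measure_mono (hsub x hx)).trans ((measure_union_le _ _).trans ?_)
      have ht := gaussTail_sqrt_log_le hε
      rw [gaussObs_tail A x h0, gaussObs_tail A x (neg_ne_zero.2 h0)]
      calc _ ≤ ENNReal.ofReal (ε / 4) + ENNReal.ofReal (ε / 4) := by gcongr
        _ = ENNReal.ofReal (ε / 2) := by
          rw [← ENNReal.ofReal_add (by linarith [hε.1]) (by linarith [hε.1])]; ring_nf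
  refine (iSup₂_le hbound).trans_lt ?_
  rw [ENNReal.ofReal_lt_ofReal_iff hε.1]
  linarith [hε.1]

/-- The sum of the error probabilities of any test of `N(Ax, I)` against `N(Ay, I)` is at least
that of the likelihood ratio test. -/
lemma two_mul_gaussTail_le_gaussObs_add (x y : Fin n → ℝ) {S : Set (Fin L → ℝ)}
    (hS : MeasurableSet S) :
    2 * ENNReal.ofReal (gaussTail (euclNorm (A.mulVec (x - y)) / 2)) ≤
      gaussObs A x S + gaussObs A y Sᶜ := by
  set v := A.mulVec (x - y) with hv
  have hvxy : A.mulVec x = A.mulVec y + v := by rw [hv, Matrix.mulVec_sub]; abel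
  rcases eq_or_ne v 0 with h0 | h0
  · have hxy : gaussObs A x = gaussObs A y := by simp [gaussObs, hvxy, h0]
    rw [hxy, measure_add_measure_compl hS, measure_univ, h0, euclNorm_eq_zero.2 rfl, zero_div,
      gaussTail_zero]
    refine le_of_eq ?_
    rw [← ENNReal.ofReal_ofNat 2, ← ENNReal.ofReal_mul (by norm_num)]
    norm_num
  set p : (Fin L → ℝ) → ℝ≥0∞ := fun ω => ENNReal.ofReal (stdGaussDensity (ω - A.mulVec x))
  set q : (Fin L → ℝ) → ℝ≥0∞ := fun ω => ENNReal.ofReal (stdGaussDensity (ω - A.mulVec y))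
  have hpm : Measurable p := measurable_gaussObs_density A x
  have hqm : Measurable q := measurable_gaussObs_density A y
  let H : Set (Fin L → ℝ) := {ω | p ω ≤ q ω}
  have hH : MeasurableSet H := measurableSet_le hpm hqm
  have hle : ∫⁻ ω, min (p ω) (q ω) ≤ gaussObs A x S + gaussObs A y Sᶜ := by
    rw [gaussObs, gaussObs, withDensity_apply _ hS, withDensity_apply _ hS.compl,
      ← lintegral_add_compl _ hS]
    gcongr
    · exact min_le_left _ _
    · exact min_le_right _ _
  have heq : gaussObs A x H + gaussObs A y Hᶜ = ∫⁻ ω, min (p ω) (q ω) := by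
    rw [gaussObs, gaussObs, withDensity_apply _ hH, withDensity_apply _ hH.compl,
      ← lintegral_add_compl (fun ω => min (p ω) (q ω)) hH]
    congr 1
    · exact setLIntegral_congr_fun hH fun ω hω => (min_eq_left hω).symm
    · exact setLIntegral_congr_fun hH.compl fun ω hω =>
        (min_eq_right (lt_of_not_ge (show ¬ p ω ≤ q ω from hω)).le).symm
  have hnorm (ω : Fin L → ℝ) : ∑ i, (ω - A.mulVec x) i ^ 2 =
      ∑ i, (ω - A.mulVec y) i ^ 2 - 2 * (v ⬝ᵥ (ω - A.mulVec y)) + v ⬝ᵥ v := by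
    rw [hvxy]
    simp only [dotProduct, Finset.mul_sum, ← Finset.sum_sub_distrib, ← Finset.sum_add_distrib,
      Pi.sub_apply, Pi.add_apply]
    exact Finset.sum_congr rfl fun i _ => by ring
  have hvv := euclNorm_sq v
  have hx : {ω | euclNorm v / 2 * euclNorm (-v) < (-v) ⬝ᵥ (ω - A.mulVec x)} ⊆ H := by
    intro ω hω
    rw [mem_ofPred_eq, euclNorm_neg, neg_dotProduct, hvxy, ← sub_sub, dotProduct_sub] at hω
    refine ENNReal.ofReal_le_ofReal ?_
    unfold stdGaussDensity
    refine mul_le_mul_of_nonneg_left (Real.exp_le_exp.2 ?_) (by positivity)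
    rw [hnorm ω]
    nlinarith
  have hy : {ω | euclNorm v / 2 * euclNorm v < v ⬝ᵥ (ω - A.mulVec y)} ⊆ Hᶜ := by
    intro ω hω
    rw [mem_ofPred_eq] at hω
    refine not_le.2 ((ENNReal.ofReal_lt_ofReal_iff (by unfold stdGaussDensity; positivity)).2 ?_)
    unfold stdGaussDensity
    refine mul_lt_mul_of_pos_left (Real.exp_lt_exp.2 ?_) (by positivity)
    rw [hnorm ω]
    nlinarith
  refine le_trans ?_ (heq.trans_le hle)
  rw [two_mul]
  refine add_le_add ?_ ?_
  · rw [← gaussObs_tail A x (neg_ne_zero.2 h0)]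
    exact measure_mono hx
  · rw [← gaussObs_tail A y h0]
    exact measure_mono hy

lemma dotProduct_sub_le_two_mul_of_iSup_lt (hε : ε ∈ Ioo (0 : ℝ) (1 / 2))
    {ghat : (Fin L → ℝ) → ℝ} (hghat : Measurable ghat) {x y : Fin n → ℝ} (hx : x ∈ X) (hy : y ∈ X)
    (hxy : euclNorm (A.mulVec (x - y)) ≤ 2 * erfInv ε) {δ : ℝ}
    (hδ : (⨆ x ∈ X, gaussObs A x {ω | δ < |ghat ω - g ⬝ᵥ x|}) < ENNReal.ofReal ε) :
    g ⬝ᵥ (x - y) ≤ 2 * δ := by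
  by_contra! h
  rw [dotProduct_sub] at h
  have hP (z : Fin n → ℝ) (hz : z ∈ X) :
      gaussObs A z {ω | δ < |ghat ω - g ⬝ᵥ z|} < ENNReal.ofReal ε :=
    (le_iSup₂ (f := fun x (_ : x ∈ X) => gaussObs A x {ω | δ < |ghat ω - g ⬝ᵥ x|})
      z hz).trans_lt hδ
  have hS : MeasurableSet {ω | δ < |ghat ω - g ⬝ᵥ x|} :=
    measurableSet_lt measurable_const (hghat.sub_const _).abs
  have hsub : {ω | δ < |ghat ω - g ⬝ᵥ x|}ᶜ ⊆ {ω | δ < |ghat ω - g ⬝ᵥ y|} := by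
    intro ω hω
    rw [mem_compl_iff, mem_ofPred_eq, not_lt] at hω
    have h1 := (abs_le.1 hω).1
    rw [mem_ofPred_eq]
    exact lt_abs.2 (Or.inl (by linarith))
  have htest := two_mul_gaussTail_le_gaussObs_add A x y hS
  have htail : ε ≤ gaussTail (euclNorm (A.mulVec (x - y)) / 2) :=
    (le_gaussTail_erfInv hε).trans (gaussTail_antitone (by linarith))
  refine lt_irrefl (2 * ENNReal.ofReal ε) ?_
  calc 2 * ENNReal.ofReal ε
      ≤ 2 * ENNReal.ofReal (gaussTail (euclNorm (A.mulVec (x - y)) / 2)) := by gcongr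
    _ ≤ _ := htest
    _ ≤ gaussObs A x {ω | δ < |ghat ω - g ⬝ᵥ x|} + gaussObs A y {ω | δ < |ghat ω - g ⬝ᵥ y|} := by
        gcongr
    _ < ENNReal.ofReal ε + ENNReal.ofReal ε := ENNReal.add_lt_add (hP x hx) (hP y hy)
    _ = 2 * ENNReal.ofReal ε := (two_mul _).symm

/-- The observation laws over a compact set are dominated by one finite measure. -/
lemma exists_finite_dominating (hXcp : IsCompact X) :
    ∃ ν : Measure (Fin L → ℝ), IsFiniteMeasure ν ∧ ∀ x ∈ X, gaussObs A x ≤ ν := by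
  have hcont : Continuous fun x : Fin n → ℝ => ∑ i, A.mulVec x i ^ 2 := by
    unfold Matrix.mulVec dotProduct; fun_prop
  obtain ⟨B, hB⟩ := hXcp.bddAbove_image hcont.continuousOn
  let C := (2 * π) ^ (-(L : ℝ) / 2) * Real.exp (B / 2)
  have hint : Integrable fun ω : Fin L → ℝ => ∏ i, Real.exp (-(1 / 4) * ω i ^ 2) :=
    Integrable.fintype_prod fun _ => integrable_exp_neg_mul_sq (by norm_num)
  refine ⟨volume.withDensity fun ω =>
    ENNReal.ofReal (C * ∏ i, Real.exp (-(1 / 4) * ω i ^ 2)), ?_, fun x hx => ?_⟩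
  · exact isFiniteMeasure_withDensity_ofReal (hint.const_mul C).2
  · refine withDensity_mono (ae_of_all _ fun ω => ENNReal.ofReal_le_ofReal ?_)
    have hBx : ∑ i, A.mulVec x i ^ 2 ≤ B := hB ⟨x, hx, rfl⟩
    unfold stdGaussDensity
    rw [← Real.exp_sum, mul_assoc, ← Real.exp_add]
    gcongr
    have : ∑ i, (1 / 2 * ω i ^ 2 - A.mulVec x i ^ 2) ≤ ∑ i, (ω - A.mulVec x) i ^ 2 := by
      refine Finset.sum_le_sum fun i _ => ?_
      rw [Pi.sub_apply]
      nlinarith [sq_nonneg (ω i - 2 * A.mulVec x i)]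
    rw [Finset.sum_sub_distrib, ← Finset.mul_sum] at this
    rw [← Finset.mul_sum]
    linarith

lemma exists_iSup_gaussObs_lt (hXcp : IsCompact X) (hε : 0 < ε) {ghat : (Fin L → ℝ) → ℝ}
    (hghat : Measurable ghat) :
    ∃ δ : ℝ, (⨆ x ∈ X, gaussObs A x {ω | δ < |ghat ω - g ⬝ᵥ x|}) < ENNReal.ofReal ε := by
  obtain ⟨ν, hν, hle⟩ := exists_finite_dominating A hXcp
  have hcont : Continuous fun x : Fin n → ℝ => |g ⬝ᵥ x| := by
    unfold dotProduct; fun_prop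
  obtain ⟨G, hG⟩ := hXcp.bddAbove_image hcont.continuousOn
  have hlim : Tendsto (fun N : ℕ => ν {ω | (N : ℝ) < |ghat ω|}) atTop (𝓝 0) := by
    have h := tendsto_measure_iInter_atTop (μ := ν) (s := fun N : ℕ => {ω | (N : ℝ) < |ghat ω|})
      (fun N => (measurableSet_lt measurable_const hghat.abs).nullMeasurableSet)
      (fun N N' hN ω hω => by
        rw [mem_ofPred_eq] at hω ⊢
        exact lt_of_le_of_lt (Nat.cast_le.2 hN) hω) ⟨0, measure_ne_top _ _⟩
    have hempty : ⋂ N : ℕ, {ω | (N : ℝ) < |ghat ω|} = ∅ := by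
      refine eq_empty_of_forall_notMem fun ω hω => ?_
      obtain ⟨N, hN⟩ := exists_nat_ge |ghat ω|
      exact (mem_iInter.1 hω N).not_ge hN
    rwa [hempty, measure_empty] at h
  obtain ⟨N, hN⟩ := (hlim.eventually_lt_const (ENNReal.ofReal_pos.2 hε)).exists
  refine ⟨N + G, lt_of_le_of_lt (iSup₂_le fun x hx => ?_) hN⟩
  refine (hle x hx _).trans (measure_mono fun ω hω => ?_)
  have h1 : |g ⬝ᵥ x| ≤ G := hG ⟨x, hx, rfl⟩
  have h2 : (N : ℝ) + G < |ghat ω - g ⬝ᵥ x| := hω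
  have h3 := abs_sub (ghat ω) (g ⬝ᵥ x)
  change (N : ℝ) < |ghat ω|
  linarith

lemma dotProduct_sub_le_two_mul_gaussRiskStar (hXcp : IsCompact X)
    (hε : ε ∈ Ioo (0 : ℝ) (1 / 2)) {x y : Fin n → ℝ} (hx : x ∈ X) (hy : y ∈ X)
    (hxy : euclNorm (A.mulVec (x - y)) ≤ 2 * erfInv ε) :
    g ⬝ᵥ (x - y) ≤ 2 * gaussRiskStar A g X ε := by
  have h : g ⬝ᵥ (x - y) / 2 ≤ gaussRiskStar A g X ε := by
    refine le_csInf ⟨_, 0, measurable_const, rfl⟩ ?_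
    rintro _ ⟨ghat, hghat, rfl⟩
    refine le_csInf (exists_iSup_gaussObs_lt A g hXcp hε.1 hghat) fun δ hδ => ?_
    linarith [dotProduct_sub_le_two_mul_of_iSup_lt A g hε hghat hx hy hxy hδ]
  linarith

lemma gaussPhiStar_le_mul_gaussRiskStar (hXne : X.Nonempty) (hXcp : IsCompact X)
    (hXcv : Convex ℝ X) (hε : ε ∈ Ioo (0 : ℝ) (1 / 2)) :
    gaussPhiStar A g X (Real.log (2 / ε)) ≤
      (√(2 * Real.log (2 / ε)) / erfInv ε) * gaussRiskStar A g X ε := by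
  have hr := log_two_div_pos hε
  set t := √(2 * Real.log (2 / ε))
  have hq := erfInv_pos hε
  have hqt : erfInv ε ≤ t := erfInv_le_sqrt_log hε
  have ht : 0 < t := hq.trans_le hqt
  suffices h : 2 * gaussPhiStar A g X (Real.log (2 / ε)) ≤
      2 * ((t / erfInv ε) * gaussRiskStar A g X ε) by linarith
  refine two_mul_gaussPhiStar_le A g hXne hr fun x hx y hy hxy => ?_
  set s := erfInv ε / t
  have hs : 0 < s := div_pos hq ht
  have hz : y + s • (x - y) ∈ X :=
    hXcv.add_smul_sub_mem hy hx ⟨hs.le, (div_le_one ht).2 hqt⟩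
  have h := dotProduct_sub_le_two_mul_gaussRiskStar A g hXcp hε hz hy (by
    rw [add_sub_cancel_left, Matrix.mulVec_smul, euclNorm_smul, abs_of_pos hs]
    calc s * euclNorm (A.mulVec (x - y)) ≤ s * (2 * t) := by gcongr
      _ = 2 * erfInv ε := by simp only [s]; field_simp)
  rw [add_sub_cancel_left, dotProduct_smul, smul_eq_mul] at h
  calc g ⬝ᵥ (x - y) = s⁻¹ * (s * g ⬝ᵥ (x - y)) := by field_simp
    _ ≤ s⁻¹ * (2 * gaussRiskStar A g X ε) := by gcongr
    _ = _ := by simp only [s, inv_div]; ring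

end Risk

/-- **Proposition 4.1.** In the Gaussian observation model `ω = Ax + ξ`,
`ξ ∼ N(0, I_L)`, for every `ε ∈ (0, 1/2)` there is an affine estimate `ĝ_ε` with
`ε`-risk at most `Φ_*(ln(2/ε))` satisfying
`Risk(ĝ_ε; ε) ≤ ψ(ε)·Risk_*(ε)` with `ψ(ε) = √(2 ln(2/ε))/ErfInv(ε)`;
moreover `ψ(ε) → 1` as `ε → 0⁺`. -/
theorem gauss_affine_estimate_near_optimal {L n : ℕ}
    (A : Matrix (Fin L) (Fin n) ℝ) (g : Fin n → ℝ) (X : Set (Fin n → ℝ))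
    (hXne : X.Nonempty) (hXcp : IsCompact X) (hXcv : Convex ℝ X)
    (ε : ℝ) (hε : ε ∈ Set.Ioo (0 : ℝ) (1/2)) :
    (∃ (φ : Fin L → ℝ) (c : ℝ),
      gaussRisk A g X (fun ω => φ ⬝ᵥ ω + c) ε ≤ gaussPhiStar A g X (Real.log (2 / ε))
      ∧ gaussRisk A g X (fun ω => φ ⬝ᵥ ω + c) ε ≤
          (Real.sqrt (2 * Real.log (2 / ε)) / erfInv ε) * gaussRiskStar A g X ε)
    ∧ Tendsto (fun t : ℝ => Real.sqrt (2 * Real.log (2 / t)) / erfInv t)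
        (nhdsWithin 0 (Set.Ioi 0)) (nhds 1) := by
  refine ⟨?_, tendsto_sqrt_log_div_erfInv⟩
  have hr := log_two_div_pos hε
  obtain ⟨z, hz⟩ := hXne
  obtain ⟨φ, hφ⟩ := exists_dual_certificate A g (hXcv.sub hXcv)
    ⟨z, hz, z, hz, sub_self z⟩ (ρ := 2 * √(2 * Real.log (2 / ε))) (by positivity)
    (M := 2 * gaussPhiStar A g X (Real.log (2 / ε))) (by
      rintro _ ⟨x, hx, y, hy, rfl⟩ hxy
      exact le_two_mul_gaussPhiStar A g hXcp hr hx hy hxy)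
  obtain ⟨c, hc⟩ := exists_affine_gaussRisk_le A g ⟨z, hz⟩ hXcp hε
    fun x hx y hy => hφ _ ⟨x, hx, y, hy, rfl⟩
  exact ⟨φ, c, hc, hc.trans (gaussPhiStar_le_mul_gaussRiskStar A g ⟨z, hz⟩ hXcp hXcv hε)⟩
end
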